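/- arXiv:1512.00587 — 2 statements merged into one kernel-verified Lean document; each statement's English description precedes it below -/
import Mathlib

section
/- Let A be a finite alphabet with |A| ≥ 2. The action of G* on Ω^0 is minimal: every G*-orbit in Ω^0 is dense. -/
/-!
Fix `x, y ∈ Ω^0` and `n ≥ 1`. A single involution `g ∈ G*` with `g • x` equal to `y` on `[0, n]`
suffices. Let `y'` agree with `y` on `[0, n]` and with `x` beyond, and set `w = φ x`, `w' = φ y'`.
The involution exchanges the words `w` and `w'` read on a window `(-N, R]`, wherever either occurs
in a configuration; only the cells `[1, n]` of the window change.

This is a well-defined involution as soon as occurrences of the two words are so far apart that the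
changed cells of one never meet the window of another (the field `sep` of `SwapData`). The words
consist of zeros up to position `0` and have a nonzero symbol at position `1`, so:

* if `x M ≠ 0` for some `M > n`, take `N = R = M`: two occurrences are disjoint, because a window
  starts with `M` zeros and its last `M` symbols start and end with a nonzero symbol;
* otherwise `x` vanishes beyond `n`; take `N = n`, `R = 3 n`: the window ends with `2 n` zeros, which
  forces occurrences to be at distance at least `3 n`.

The involution fixes every constant configuration, which places it in `G*`
(`SwapData.homeo_mem_Gstar`), and it turns the occurrence of `w` at the origin of `φ x` into `w'`
without touching the constant prefix (`SwapData.omegaAct_eq`).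
-/

open Filter MeasureTheory

/-- The group of self-homeomorphisms of a topological space,
with `(f * g) x = f (g x)`. -/
instance homeoGroup (X : Type*) [TopologicalSpace X] : Group (X ≃ₜ X) where
  mul f g := g.trans f
  one := Homeomorph.refl X
  inv := Homeomorph.symm
  mul_assoc f g h := Homeomorph.ext fun _ => rfl
  one_mul f := Homeomorph.ext fun _ => rfl
  mul_one f := Homeomorph.ext fun _ => rfl
  inv_mul_cancel f := Homeomorph.ext f.symm_apply_apply

/-- The left shift `(σ x) m = x (m+1)` on `A^ℤ`, as a homeomorphism. -/
def shiftHomeo (A : Type*) [TopologicalSpace A] : (ℤ → A) ≃ₜ (ℤ → A) where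
  toFun x := fun m => x (m + 1)
  invFun x := fun m => x (m - 1)
  left_inv x := funext fun m => by simp
  right_inv x := funext fun m => by simp
  continuous_toFun := continuous_pi fun m => continuous_apply (m + 1)
  continuous_invFun := continuous_pi fun m => continuous_apply (m - 1)

/-- `Aut(A^ℤ)`: the group of homeomorphisms of `A^ℤ` commuting with the shift. -/
def ShiftAut (A : Type*) [TopologicalSpace A] : Subgroup ((ℤ → A) ≃ₜ (ℤ → A)) :=
  Subgroup.centralizer {shiftHomeo A}

/-- `Ω`: the space of one-sided configurations whose zeroth symbol differs from
the first. -/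
def OmegaSet (A : Type*) : Set (ℕ → A) := {x | x 0 ≠ x 1}

/-- `Ω^a`: the elements of `Ω` whose zeroth symbol is `a`. -/
def OmegaA (A : Type*) (a : A) : Set (ℕ → A) := {x | x 0 = a ∧ x 0 ≠ x 1}

/-- `φ : Ω → A^ℤ_*` prepends an infinite constant `x 0` prefix to `x`. -/
def phiMap (A : Type*) (x : ℕ → A) : ℤ → A :=
  fun m => if m ≤ 0 then x 0 else x m.toNat

/-- `ℓ(y)`: the last coordinate of the constant prefix of `y ∈ A^ℤ_*`. -/
noncomputable def ellVal (A : Type*) (y : ℤ → A) : ℤ :=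
  sInf {m : ℤ | y m ≠ y (m + 1)}

/-- The action of `Aut(A^ℤ)` on `Ω`: `g • x = ψ (g (φ x))`, where
`ψ(y) = φ⁻¹(σ^{ℓ(y)} y)`, i.e. `(g • x) n = (g (φ x)) (ℓ (g (φ x)) + n)`. -/
noncomputable def omegaAct (A : Type*) [TopologicalSpace A]
    (g : (ℤ → A) ≃ₜ (ℤ → A)) (x : ℕ → A) : ℕ → A :=
  fun n => g (phiMap A x) (ellVal A (g (phiMap A x)) + n)

/-- `G* = ∩_{a ∈ A} G^a`, where `G^a` is the set of automorphisms that
preserve `Ω^a` under the action on `Ω`. -/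
def Gstar (A : Type*) [TopologicalSpace A] : Set ((ℤ → A) ≃ₜ (ℤ → A)) :=
  {g | g ∈ ShiftAut A ∧ ∀ a : A, omegaAct A g '' OmegaA A a = OmegaA A a}

/-! ### Exchanging two words -/

/-- One of the words `w`, `w'`, read on the window `(-N, R]`, occurs in `c` around position `i`. -/
def Mark {A : Type*} (w w' : ℤ → A) (N R : ℤ) (c : ℤ → A) (i : ℤ) : Prop :=
  (∀ k, -N < k → k ≤ R → c (i + k) = w k) ∨ (∀ k, -N < k → k ≤ R → c (i + k) = w' k)

/-- Two words on the window `(-N, R]` that differ only inside `[1, n]`, vanish up to `0`, are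
nonzero at `1`, and whose occurrences `i < j` in any configuration are separated: the cells
`[i + 1, i + n]` miss the window of `j`, and the cells `[j + 1, j + n]` miss the window of `i`. -/
structure SwapData (A : Type*) [Zero A] where
  w : ℤ → A
  w' : ℤ → A
  N : ℤ
  R : ℤ
  n : ℤ
  hN : 1 ≤ N
  hn : 1 ≤ n
  hR : n ≤ R
  w_zero : ∀ k ≤ 0, w k = 0
  w'_zero : ∀ k ≤ 0, w' k = 0
  w_one : w 1 ≠ 0
  w'_one : w' 1 ≠ 0
  agree : ∀ k, ¬ (1 ≤ k ∧ k ≤ n) → w k = w' k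
  sep : ∀ c i j, Mark w w' N R c i → Mark w w' N R c j → i < j → i + R ≤ j ∧ i + n + N ≤ j

namespace SwapData

variable {A : Type*} [Zero A] (S : SwapData A)

/-- An occurrence of one of the two words of `S` in `c` at `i`. -/
abbrev IsMark (c : ℤ → A) (i : ℤ) : Prop := Mark S.w S.w' S.N S.R c i

/-- The cell `m` of `c` is the `k`-th cell of an occurrence, with `k` in the changing part
`[1, n]`. -/
def Site (c : ℤ → A) (m k : ℤ) : Prop := 1 ≤ k ∧ k ≤ S.n ∧ S.IsMark c (m - k)

open Classical in
/-- The map exchanging the words `w` and `w'` at all their occurrences. By separation there is at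
most one `k` with `S.Site c m k`, so the choice made by `epsilon` is harmless. -/
noncomputable def map (c : ℤ → A) (m : ℤ) : A :=
  if S.Site c m (Classical.epsilon (S.Site c m)) then
    Equiv.swap (S.w (Classical.epsilon (S.Site c m))) (S.w' (Classical.epsilon (S.Site c m))) (c m)
  else c m

variable {S}

lemma site_unique {c : ℤ → A} {m k l : ℤ} (hk : S.Site c m k) (hl : S.Site c m l) : k = l := by
  obtain ⟨hk1, hk2, hk3⟩ := hk
  obtain ⟨hl1, hl2, hl3⟩ := hl
  have := S.hN
  rcases lt_trichotomy k l with h | h | h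
  · have := S.sep c _ _ hl3 hk3 (by omega)
    omega
  · exact h
  · have := S.sep c _ _ hk3 hl3 (by omega)
    omega

open Classical in
lemma map_of_site {c : ℤ → A} {m k : ℤ} (hk : S.Site c m k) :
    S.map c m = Equiv.swap (S.w k) (S.w' k) (c m) := by
  have h : S.Site c m (Classical.epsilon (S.Site c m)) := Classical.epsilon_spec ⟨k, hk⟩
  have e := site_unique h hk
  rw [map, if_pos h, e]

lemma map_of_not_site {c : ℤ → A} {m : ℤ} (h : ∀ k, ¬ S.Site c m k) : S.map c m = c m := by
  rw [map, if_neg (h _)]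

/-- If `i` is separated from every other occurrence in `c`, then a cell of the window around `i` can
change only if `i` is itself an occurrence and the cell lies in its changing part. -/
lemma map_window {c : ℤ → A} {i k : ℤ}
    (hc : ∀ j, S.IsMark c j → i ≠ j → (i < j → i + S.R ≤ j ∧ i + S.n + S.N ≤ j) ∧
      (j < i → j + S.R ≤ i ∧ j + S.n + S.N ≤ i))
    (h1 : -S.N < k) (h2 : k ≤ S.R) (hk : ¬ (1 ≤ k ∧ k ≤ S.n) ∨ ¬ S.IsMark c i) :
    S.map c (i + k) = c (i + k) := by
  apply map_of_not_site
  rintro l ⟨hl1, hl2, hl⟩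
  by_cases hij : i = i + k - l
  · rw [← hij] at hl
    rcases hk with hk | hk
    · omega
    · exact hk hl
  · have := hc _ hl hij
    omega

lemma sep_of_isMark {c : ℤ → A} {i j : ℤ} (hi : S.IsMark c i) (hj : S.IsMark c j) :
    (i < j → i + S.R ≤ j ∧ i + S.n + S.N ≤ j) ∧ (j < i → j + S.R ≤ i ∧ j + S.n + S.N ≤ i) :=
  ⟨S.sep c i j hi hj, S.sep c j i hj hi⟩

lemma isMark_map_of {c : ℤ → A} {i : ℤ} (hi : S.IsMark c i) : S.IsMark (S.map c) i := by
  classical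
  have key : ∀ k, -S.N < k → k ≤ S.R →
      S.map c (i + k) = Equiv.swap (S.w k) (S.w' k) (c (i + k)) := by
    intro k h1 h2
    by_cases hk : 1 ≤ k ∧ k ≤ S.n
    · exact map_of_site ⟨hk.1, hk.2, by simpa using hi⟩
    · rw [map_window (fun j hj _ => sep_of_isMark hi hj) h1 h2 (Or.inl hk), S.agree k hk]
      simp
  rcases hi with h | h
  · right
    intro k h1 h2
    rw [key k h1 h2, h k h1 h2, Equiv.swap_apply_left]
  · left
    intro k h1 h2
    rw [key k h1 h2, h k h1 h2, Equiv.swap_apply_right]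

/-- No new occurrence is created: since the old occurrences persist, a new one would be separated
from all of them, hence would lie in an unchanged region. -/
lemma isMark_map_iff {c : ℤ → A} {i : ℤ} : S.IsMark (S.map c) i ↔ S.IsMark c i := by
  refine ⟨fun h => ?_, isMark_map_of⟩
  by_contra hi
  have key : ∀ k, -S.N < k → k ≤ S.R → S.map c (i + k) = c (i + k) := fun k h1 h2 =>
    map_window (fun j hj _ => sep_of_isMark h (isMark_map_of hj)) h1 h2 (Or.inr hi)
  apply hi
  rcases h with h | h
  · exact Or.inl fun k h1 h2 => by rw [← key k h1 h2, h k h1 h2]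
  · exact Or.inr fun k h1 h2 => by rw [← key k h1 h2, h k h1 h2]

lemma site_map_iff {c : ℤ → A} {m k : ℤ} : S.Site (S.map c) m k ↔ S.Site c m k := by
  simp only [Site, isMark_map_iff]

lemma map_map (c : ℤ → A) : S.map (S.map c) = c := by
  classical
  funext m
  by_cases h : ∃ k, S.Site c m k
  · obtain ⟨k, hk⟩ := h
    rw [map_of_site (site_map_iff.2 hk), map_of_site hk, Equiv.swap_apply_self]
  · push Not at h
    rw [map_of_not_site (fun k => fun hk => h k (site_map_iff.1 hk)), map_of_not_site h]

lemma map_translate (c : ℤ → A) (t m : ℤ) : S.map (fun i => c (i + t)) m = S.map c (m + t) := by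
  have h : S.Site (fun i => c (i + t)) m = S.Site c (m + t) := by
    funext k
    have e : ∀ l, m - k + l + t = m + t - k + l := fun l => by ring
    simp only [Site, Mark, e]
  unfold map
  rw [h]

lemma map_local {c c' : ℤ → A} {m : ℤ}
    (h : ∀ k ∈ Finset.Icc (-S.n - S.N) S.R, c (m + k) = c' (m + k)) : S.map c m = S.map c' m := by
  have hn := S.hn
  have hN := S.hN
  have hR := S.hR
  have hm : c m = c' m := by
    simpa using h 0 (Finset.mem_Icc.2 ⟨by omega, by omega⟩)
  have hs : S.Site c m = S.Site c' m := by
    funext k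
    simp only [Site, Mark, eq_iff_iff]
    refine and_congr_right fun h1 => and_congr_right fun h2 => ?_
    have e : ∀ l, -S.N < l → l ≤ S.R → c (m - k + l) = c' (m - k + l) := by
      intro l h3 h4
      have := h (l - k) (Finset.mem_Icc.2 ⟨by omega, by omega⟩)
      rwa [show m + (l - k) = m - k + l by ring] at this
    refine or_congr ?_ ?_ <;>
      exact forall_congr' fun l => forall_congr' fun h3 => forall_congr' fun h4 => by
        rw [e l h3 h4]
  unfold map
  rw [hs, hm]

lemma IsMark.one_ne {c : ℤ → A} {i : ℤ} (h : S.IsMark c i) : c (i + 1) ≠ 0 := by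
  have := S.hN
  have := S.hn
  have := S.hR
  rcases h with h | h
  · rw [h 1 (by omega) (by omega)]
    exact S.w_one
  · rw [h 1 (by omega) (by omega)]
    exact S.w'_one

lemma IsMark.zero {c : ℤ → A} {i : ℤ} (h : S.IsMark c i) : c (i + 0) = 0 := by
  have := S.hN
  have := S.hn
  have := S.hR
  rcases h with h | h
  · rw [h 0 (by omega) (by omega)]
    exact S.w_zero 0 le_rfl
  · rw [h 0 (by omega) (by omega)]
    exact S.w'_zero 0 le_rfl

lemma map_const (a : A) : S.map (fun _ => a) = fun _ => a :=
  funext fun _ => map_of_not_site fun _ hk => hk.2.2.one_ne hk.2.2.zero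

variable [TopologicalSpace A] [DiscreteTopology A]

lemma continuous_map : Continuous S.map := by
  refine continuous_pi fun m => continuous_iff_continuousAt.2 fun c => ?_
  have h : ∀ᶠ c' in nhds c, ∀ k ∈ Finset.Icc (-S.n - S.N) S.R, c' (m + k) = c (m + k) := by
    rw [Filter.eventually_all_finset]
    intro k _
    have hc : ContinuousAt (fun c' : ℤ → A => c' (m + k)) c := (continuous_apply _).continuousAt
    exact hc (show {c (m + k)} ∈ nhds (c (m + k)) by simp)
  have h' : (fun _ => S.map c m) =ᶠ[nhds c] fun c' => S.map c' m := by
    filter_upwards [h] with c' hc'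
    exact (map_local hc').symm
  exact continuousAt_const.congr h'

variable (S) in
/-- The word exchange as a homeomorphism of `A^ℤ`. -/
noncomputable def homeo : (ℤ → A) ≃ₜ (ℤ → A) where
  toFun := S.map
  invFun := S.map
  left_inv := map_map
  right_inv := map_map
  continuous_toFun := continuous_map
  continuous_invFun := continuous_map

end SwapData

/-! ### The action on `Ω` -/

lemma ellVal_eq {A : Type*} {c : ℤ → A} {a : A} {t : ℤ} (h : ∀ m ≤ t, c m = a)
    (h' : c (t + 1) ≠ a) : ellVal A c = t := by
  have hl : IsLeast {m : ℤ | c m ≠ c (m + 1)} t := by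
    refine ⟨?_, fun m hm => ?_⟩
    · change c t ≠ c (t + 1)
      rw [h t le_rfl]
      exact h'.symm
    · by_contra hlt
      exact hm (by rw [h m (by omega), h (m + 1) (by omega)])
  exact hl.csInf_eq

lemma exists_prefix_end {A : Type*} {c : ℤ → A} {a : A} {s : ℤ} (h : ∀ m ≤ s, c m = a)
    (h' : c ≠ fun _ => a) : ∃ t, (∀ m ≤ t, c m = a) ∧ c (t + 1) ≠ a := by
  obtain ⟨m, hm⟩ := Function.ne_iff.1 h'
  obtain ⟨t, ht, hmin⟩ := Int.exists_least_of_bdd (P := fun m => c m ≠ a)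
    ⟨s, fun z hz => by
      by_contra hlt
      exact hz (h z (by omega))⟩ ⟨m, hm⟩
  refine ⟨t - 1, fun m hm => ?_, by simpa using ht⟩
  by_contra hne
  have := hmin m hne
  omega

lemma phiMap_nonpos {A : Type*} (x : ℕ → A) {m : ℤ} (hm : m ≤ 0) : phiMap A x m = x 0 := by
  simp [phiMap, hm]

lemma phiMap_natCast {A : Type*} (x : ℕ → A) (k : ℕ) : phiMap A x k = x k := by
  unfold phiMap
  split_ifs with h
  · rw [show k = 0 by omega]
  · simp

lemma phiMap_one {A : Type*} (x : ℕ → A) : phiMap A x 1 = x 1 := phiMap_natCast x 1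

/-- `φ` recovers, up to a shift, a configuration that is constant up to `t` from its restriction to
`[t, ∞)`. -/
lemma phiMap_translate {A : Type*} {c : ℤ → A} {a : A} {t : ℤ} (h : ∀ m ≤ t, c m = a) :
    phiMap A (fun k : ℕ => c (t + k)) = fun m => c (m + t) := by
  funext m
  unfold phiMap
  split_ifs with hm
  · exact (h (t + (0 : ℕ)) (by simp)).trans (h (m + t) (by omega)).symm
  · change c (t + (m.toNat : ℤ)) = c (m + t)
    congr 1
    omega

namespace SwapData

variable {A : Type*} [Zero A] [TopologicalSpace A] [DiscreteTopology A] {S : SwapData A}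

lemma homeo_mem_ShiftAut : S.homeo ∈ ShiftAut A := by
  rw [ShiftAut, Subgroup.mem_centralizer_singleton_iff]
  refine Homeomorph.ext fun c => funext fun m => ?_
  exact (map_translate c 1 m)

/-- The exchange preserves each `Ω^a` and acts on it as an involution. -/
lemma omegaAct_homeo {a : A} {x : ℕ → A} (hx : x ∈ OmegaA A a) :
    omegaAct A S.homeo x ∈ OmegaA A a ∧ omegaAct A S.homeo (omegaAct A S.homeo x) = x := by
  obtain ⟨hx0, hx1⟩ := hx
  set c := phiMap A x with hc
  have hc0 : ∀ m ≤ 0, c m = a := fun m hm => by rw [hc, phiMap_nonpos x hm, hx0]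
  have hc1 : c 1 ≠ a := by
    rw [hc, phiMap_one, ← hx0]
    exact hx1.symm
  have hpre : ∀ m ≤ -S.R, S.map c m = a := by
    intro m hm
    rw [map_local (c' := fun _ => a), map_const]
    intro k hk
    rw [Finset.mem_Icc] at hk
    exact hc0 _ (by omega)
  have hne : S.map c ≠ fun _ => a := by
    intro h
    have := map_map (S := S) c
    rw [h, map_const] at this
    exact hc1 (congrFun this 1).symm
  obtain ⟨t, ht, ht1⟩ := exists_prefix_end hpre hne
  have hact : omegaAct A S.homeo x = fun k : ℕ => S.map c (t + k) := by
    funext k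
    change S.map c (ellVal A (S.map c) + k) = _
    rw [ellVal_eq ht ht1]
  refine ⟨?_, ?_⟩
  · rw [hact]
    refine ⟨ht _ (by simp), ?_⟩
    change S.map c (t + (0 : ℕ)) ≠ S.map c (t + (1 : ℕ))
    rw [ht _ (by simp)]
    simpa using ht1.symm
  · have hphi : S.map (phiMap A (omegaAct A S.homeo x)) = fun m => c (m + t) := by
      rw [hact, phiMap_translate ht]
      funext m
      rw [map_translate, map_map]
    funext k
    change S.map (phiMap A (omegaAct A S.homeo x))
      (ellVal A (S.map (phiMap A (omegaAct A S.homeo x))) + k) = x k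
    rw [hphi, ellVal_eq (a := a) (t := -t) (fun m hm => hc0 _ (by omega))
      (by simpa [add_right_comm] using hc1)]
    simp only [neg_add_cancel_comm]
    exact phiMap_natCast x k

lemma homeo_mem_Gstar : S.homeo ∈ Gstar A := by
  refine ⟨homeo_mem_ShiftAut, fun a => Set.Subset.antisymm ?_ ?_⟩
  · rintro _ ⟨x, hx, rfl⟩
    exact (omegaAct_homeo hx).1
  · intro x hx
    exact ⟨_, (omegaAct_homeo hx).1, (omegaAct_homeo hx).2⟩

/-- If `w = φ x`, the exchange replaces the initial part of `x` by that of `w'`. -/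
lemma omegaAct_eq {x : ℕ → A} (hw : S.w = phiMap A x) {k : ℕ} (hk : (k : ℤ) ≤ S.n) :
    omegaAct A S.homeo x k = S.w' k := by
  classical
  have hn := S.hn
  have hmark : S.IsMark (phiMap A x) 0 := Or.inl fun k _ _ => by rw [hw, zero_add]
  have hin : ∀ l : ℤ, 1 ≤ l → l ≤ S.n → S.map (phiMap A x) l = S.w' l := by
    intro l h1 h2
    rw [map_of_site (k := l) ⟨h1, h2, by simpa using hmark⟩, ← hw, Equiv.swap_apply_left]
  have hout : ∀ l ≤ 0, S.map (phiMap A x) l = 0 := by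
    intro l hl
    rw [map_of_not_site, ← hw, S.w_zero l hl]
    rintro j ⟨h1, h2, h3⟩
    apply h3.one_ne
    rw [← hw, S.w_zero _ (by omega)]
  have hell : ellVal A (S.map (phiMap A x)) = 0 := by
    apply ellVal_eq hout
    rw [zero_add, hin 1 le_rfl hn]
    exact S.w'_one
  change S.map (phiMap A x) (ellVal A (S.map (phiMap A x)) + k) = _
  rw [hell, zero_add]
  rcases Nat.eq_zero_or_pos k with rfl | hpos
  · rw [hout _ (by simp), S.w'_zero _ (by simp)]
  · exact hin k (by omega) hk

end SwapData

/-! ### Choice of the words -/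

/-- The pair of words `φ x`, `φ y'` can be completed to exchange data. -/
lemma exists_swapData {A : Type*} [Zero A] {x y : ℕ → A} (hx : x ∈ OmegaA A 0)
    (hy : y ∈ OmegaA A 0) {n : ℕ} (hn : 1 ≤ n) :
    ∃ S : SwapData A, S.w = phiMap A x ∧ S.n = n ∧ ∀ k : ℕ, k ≤ n → S.w' k = y k := by
  obtain ⟨hx0, hx1⟩ := hx
  obtain ⟨hy0, hy1⟩ := hy
  set y' : ℕ → A := fun k => if k ≤ n then y k else x k with hy'
  have hw0 : ∀ k ≤ 0, phiMap A x k = 0 := fun k hk => by rw [phiMap_nonpos x hk, hx0]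
  have hw0' : ∀ k ≤ 0, phiMap A y' k = 0 := fun k hk => by
    rw [phiMap_nonpos y' hk, ← hy0]
    simp [hy']
  have hw1 : phiMap A x 1 ≠ 0 := by
    rw [phiMap_one, ← hx0]
    exact hx1.symm
  have hw1' : phiMap A y' 1 ≠ 0 := by
    rw [phiMap_one, ← hy0]
    simpa [hy', hn] using hy1.symm
  have hagree : ∀ k : ℤ, ¬ (1 ≤ k ∧ k ≤ n) → phiMap A x k = phiMap A y' k := by
    intro k hk
    rcases le_or_gt k 0 with h | h
    · rw [hw0 k h, hw0' k h]
    · lift k to ℕ using h.le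
      rw [phiMap_natCast, phiMap_natCast]
      simp only [hy']
      rw [if_neg (by omega)]
  have hval : ∀ k : ℕ, k ≤ n → phiMap A y' k = y k := by
    intro k hk
    rw [phiMap_natCast]
    simp [hy', hk]
  -- the leading zeros and the nonzero symbol at `1`, for any occurrence of either word
  have mzero : ∀ N R c i, Mark (phiMap A x) (phiMap A y') N R c i →
      ∀ k, -N < k → k ≤ 0 → k ≤ R → c (i + k) = 0 := by
    rintro N R c i (h | h) k h1 h2 h3
    · rw [h k h1 h3, hw0 k h2]
    · rw [h k h1 h3, hw0' k h2]
  have mone : ∀ N R c i, 1 ≤ N → 1 ≤ R → Mark (phiMap A x) (phiMap A y') N R c i →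
      c (i + 1) ≠ 0 := by
    rintro N R c i h1 h2 (h | h)
    · rwa [h 1 (by omega) h2]
    · rwa [h 1 (by omega) h2]
  by_cases hM : ∃ M, n < M ∧ x M ≠ 0
  · obtain ⟨M, hnM, hxM⟩ := hM
    have e : phiMap A x (M : ℤ) ≠ 0 := by rwa [phiMap_natCast]
    have e' : phiMap A y' (M : ℤ) ≠ 0 := by rwa [← hagree M (by omega)]
    refine ⟨⟨phiMap A x, phiMap A y', M, M, n, by omega, by omega, by omega, hw0, hw0', hw1, hw1',
      hagree, fun c i j hi hj hij => ?_⟩, rfl, rfl, hval⟩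
    have hlast : c (i + M) ≠ 0 := by
      rcases hi with h | h
      · rwa [h M (by omega) le_rfl]
      · rwa [h M (by omega) le_rfl]
    by_contra hcon
    by_cases hd : j ≤ i + M
    · refine mone _ _ c i (by omega) (by omega) hi ?_
      have := mzero _ _ c j hj (i + 1 - j) (by omega) (by omega) (by omega)
      rwa [add_sub_cancel] at this
    · apply hlast
      have := mzero _ _ c j hj (i + M - j) (by omega) (by omega) (by omega)
      rwa [add_sub_cancel] at this
  · push Not at hM
    have e : ∀ k : ℤ, n < k → phiMap A x k = 0 := by
      intro k hk
      lift k to ℕ using (by omega)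
      rw [phiMap_natCast]
      exact hM k (by omega)
    have e' : ∀ k : ℤ, n < k → phiMap A y' k = 0 := fun k hk => by
      rw [← hagree k (by omega), e k hk]
    refine ⟨⟨phiMap A x, phiMap A y', n, 3 * n, n, by omega, by omega, by omega, hw0, hw0', hw1,
      hw1', hagree, fun c i j hi hj hij => ?_⟩, rfl, rfl, hval⟩
    by_contra hcon
    by_cases hd : j ≤ i + n
    · refine mone _ _ c i (by omega) (by omega) hi ?_
      have := mzero _ _ c j hj (i + 1 - j) (by omega) (by omega) (by omega)
      rwa [add_sub_cancel] at this
    · refine mone _ _ c j (by omega) (by omega) hj ?_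
      rw [show j + 1 = i + (j + 1 - i) by ring]
      rcases hi with h | h
      · rw [h _ (by omega) (by omega), e _ (by omega)]
      · rw [h _ (by omega) (by omega), e' _ (by omega)]

/-- The action of `G*` on `Ω^0` is minimal: every `G*`-orbit is dense
in `Ω^0`. -/
theorem gstar_minimal_omega0
    (A : Type*) [Fintype A] [TopologicalSpace A] [DiscreteTopology A] [Zero A]
    (hA : 2 ≤ Fintype.card A) :
    ∀ x ∈ OmegaA A 0,
      OmegaA A 0 ⊆ closure {y : ℕ → A | ∃ g ∈ Gstar A, omegaAct A g x = y} := by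
  intro x hx y hy
  rw [mem_closure_iff]
  intro o ho hyo
  obtain ⟨I, u, hu, hsub⟩ := isOpen_pi_iff.1 ho y hyo
  obtain ⟨S, hw, hSn, hval⟩ := exists_swapData hx hy (n := I.sup id + 1) (by omega)
  refine ⟨omegaAct A S.homeo x, hsub fun k hk => ?_, S.homeo, S.homeo_mem_Gstar, rfl⟩
  have hkI : k ≤ I.sup id + 1 := (Finset.le_sup (f := id) hk).trans (Nat.le_succ _)
  rw [S.omegaAct_eq hw (by rw [hSn]; exact_mod_cast hkI), hval k hkI]
  exact (hu k hk).2
end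

section
/- Let A be a finite alphabet with |A| ≥ 2. The group Aut(A^ℤ) contains a free subgroup on two generators; in particular, Aut(A^ℤ) is not amenable. -/
/-- A group is amenable if there is a left-invariant mean on its
bounded real-valued functions. -/
def IsAmenable (G : Type*) [Group G] : Prop :=
  ∃ m : (G → ℝ) → ℝ,
    (∀ f₁ f₂ : G → ℝ, (∃ C, ∀ x, |f₁ x| ≤ C) → (∃ C, ∀ x, |f₂ x| ≤ C) →
      m (f₁ + f₂) = m f₁ + m f₂) ∧
    (∀ (c : ℝ) (f : G → ℝ), (∃ C, ∀ x, |f x| ≤ C) → m (c • f) = c * m f) ∧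
    (∀ f : G → ℝ, (∃ C, ∀ x, |f x| ≤ C) → (∀ x, 0 ≤ f x) → 0 ≤ m f) ∧
    m (fun _ => 1) = 1 ∧
    (∀ (g : G) (f : G → ℝ), (∃ C, ∀ x, |f x| ≤ C) →
      m (fun x => f (g * x)) = m f)

/-! ### A ping-pong criterion -/

section PingPong

variable {G X : Type*} [Group G] [MulAction G X]

/-- With `p² = p⁻¹`, the positive powers of `p q p` are `p q p⁻¹ q p⁻¹ ⋯ q p`, an alternating
word, so they carry `E` to `O` as `p` does. -/
lemma pow_pqp_smul_mem {p q : G} {E O : Set X} (hp3 : p * p = p⁻¹)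
    (hp : ∀ x ∈ E, p • x ∈ O) (hp' : ∀ x ∈ E, p⁻¹ • x ∈ O) (hq : ∀ x ∈ O, q • x ∈ E)
    (n : ℕ) : ∀ x ∈ E, (p * q * p) ^ (n + 1) • x ∈ O := by
  have key : ∃ y : G, (p * q * p) ^ (n + 1) = p * y ∧ ∀ x ∈ E, y • x ∈ E := by
    induction n with
    | zero =>
      refine ⟨q * p, by simp [mul_assoc], fun x hx => ?_⟩
      rw [mul_smul]
      exact hq _ (hp _ hx)
    | succ n ih =>
      obtain ⟨y, hy, hE⟩ := ih
      refine ⟨q * p⁻¹ * y, ?_, fun x hx => ?_⟩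
      · rw [pow_succ', hy, ← hp3]
        simp only [mul_assoc]
      · rw [mul_smul, mul_smul]
        exact hq _ (hp' _ (hE x hx))
  obtain ⟨y, hy, hE⟩ := key
  intro x hx
  rw [hy, mul_smul]
  exact hp _ (hE x hx)

/-- The same conclusion for all nonzero integer powers. -/
lemma zpow_pqp_smul_mem {p q : G} {E O : Set X} (hp3 : p * p = p⁻¹)
    (hp : ∀ x ∈ E, p • x ∈ O) (hp' : ∀ x ∈ E, p⁻¹ • x ∈ O)
    (hq : ∀ x ∈ O, q • x ∈ E) (hq' : ∀ x ∈ O, q⁻¹ • x ∈ E)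
    (n : ℤ) (hn : n ≠ 0) : ∀ x ∈ E, (p * q * p) ^ n • x ∈ O := by
  rcases lt_or_gt_of_ne hn with h | h
  · obtain ⟨k, rfl⟩ : ∃ k : ℕ, n = -((k + 1 : ℕ) : ℤ) := ⟨(-n - 1).toNat, by omega⟩
    rw [zpow_neg, zpow_natCast, ← inv_pow,
      show (p * q * p)⁻¹ = p⁻¹ * q⁻¹ * p⁻¹ by simp [mul_assoc]]
    have hp3' : p⁻¹ * p⁻¹ = p⁻¹⁻¹ := by rw [← mul_inv_rev, hp3]
    exact pow_pqp_smul_mem hp3' hp' (by simpa using hp) hq' k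
  · obtain ⟨k, rfl⟩ : ∃ k : ℕ, n = ((k + 1 : ℕ) : ℤ) := ⟨(n - 1).toNat, by omega⟩
    rw [zpow_natCast]
    exact pow_pqp_smul_mem hp3 hp hp' hq k

open scoped Pointwise in
/-- If `p`, `q` have order dividing three and their nontrivial powers exchange two disjoint
nonempty sets, `p^{±1}` carrying `E` to `O` and `q^{±1}` carrying `O` to `E`, then `p q p` and
`q p q` freely generate a free group. -/
lemma exists_free_of_order_three (p q : G) (E O : Set X) (hE : E.Nonempty) (hO : O.Nonempty)
    (hd : Disjoint E O) (hp3 : p * p = p⁻¹) (hq3 : q * q = q⁻¹)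
    (hp : ∀ x ∈ E, p • x ∈ O) (hp' : ∀ x ∈ E, p⁻¹ • x ∈ O)
    (hq : ∀ x ∈ O, q • x ∈ E) (hq' : ∀ x ∈ O, q⁻¹ • x ∈ E) :
    ∃ f : FreeGroup (Fin 2) →* G, Function.Injective f := by
  let a : Fin 2 → G := ![p * q * p, q * p * q]
  refine ⟨FreeGroup.lift a, ?_⟩
  have hlift : FreeGroup.lift a =
      (Monoid.CoprodI.lift fun i => FreeGroup.lift fun _ : Unit => a i).comp
        (freeGroupEquivCoprodI (ι := Fin 2)).toMonoidHom := by
    ext i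
    simp
  rw [hlift, MonoidHom.coe_comp]
  refine Function.Injective.comp ?_ (MulEquiv.injective freeGroupEquivCoprodI)
  have hpow : ∀ (i : Fin 2) (h : FreeGroup Unit), h ≠ 1 →
      ∃ n : ℤ, n ≠ 0 ∧ (FreeGroup.lift fun _ : Unit => a i) h = a i ^ n := by
    intro i h hne
    obtain ⟨n, rfl⟩ := FreeGroup.freeGroupUnitEquivInt.symm.surjective h
    refine ⟨n, ?_, ?_⟩
    · rintro rfl
      exact hne (by simp [FreeGroup.freeGroupUnitEquivInt])
    · simp [FreeGroup.freeGroupUnitEquivInt]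
  refine Monoid.CoprodI.lift_injective_of_ping_pong (H := fun _ : Fin 2 => FreeGroup Unit)
    (fun i => FreeGroup.lift fun _ : Unit => a i) (Or.inr ⟨0, ?_⟩) ![O, E] ?_ ?_ ?_
  · rw [Cardinal.mk_congr FreeGroup.freeGroupUnitEquivInt, Cardinal.mk_int]
    exact (Cardinal.natCast_lt_aleph0 (n := 3)).le
  · intro i
    fin_cases i
    · exact hO
    · exact hE
  · intro i j hij
    fin_cases i <;> fin_cases j
    · exact absurd rfl hij
    · exact hd.symm
    · exact hd
    · exact absurd rfl hij
  · intro i j hij h hne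
    obtain ⟨n, hn, hw⟩ := hpow i h hne
    rintro _ ⟨x, hx, rfl⟩
    change (FreeGroup.lift fun _ : Unit => a i) h • x ∈ _
    rw [hw]
    fin_cases i <;> fin_cases j
    · exact absurd rfl hij
    · exact zpow_pqp_smul_mem hp3 hp hp' hq hq' n hn x hx
    · exact zpow_pqp_smul_mem hq3 hq hq' hp hp' n hn x hx
    · exact absurd rfl hij

end PingPong

/-! ### Groups containing a free group of rank two are not amenable -/

/-- Choosing one point in every coset `F g` of the free subgroup gives a left-equivariant map from
the group to the free group. -/
lemma exists_equivariant {G F : Type*} [Group G] [Group F] (f : F →* G)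
    (hf : Function.Injective f) : ∃ h : G → F, ∀ w g, h (f w * g) = w * h g := by
  let r : G → G := fun g => (Quotient.mk (QuotientGroup.rightRel f.range) g).out
  have hr : ∀ g, ∃ w, f w * r g = g := by
    intro g
    have h1 : (QuotientGroup.rightRel f.range) (r g) g :=
      Quotient.exact (Quotient.out_eq (Quotient.mk (QuotientGroup.rightRel f.range) g))
    rw [QuotientGroup.rightRel_apply] at h1
    obtain ⟨w, hw⟩ := h1
    exact ⟨w, by rw [hw]; simp⟩
  choose h hh using hr
  refine ⟨h, fun w g => hf ?_⟩
  have hrr : r (f w * g) = r g := by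
    have : Quotient.mk (QuotientGroup.rightRel f.range) (f w * g) = Quotient.mk _ g := by
      apply Quotient.sound
      change (QuotientGroup.rightRel f.range) _ _
      rw [QuotientGroup.rightRel_apply]
      exact ⟨w⁻¹, by simp⟩
    change Quotient.out _ = Quotient.out _
    rw [this]
  apply mul_right_cancel (b := r g)
  rw [map_mul, mul_assoc, hh g, ← hrr, hh]

/-- An invariant mean, pulled back along an equivariant map to the free group, would give total
mass at least two to the four disjoint sets of reduced words with a given first letter: for each
generator `a`, the words starting with `a` and `a⁻¹` together have mass at least one. -/
lemma not_isAmenable_of_free {G : Type*} [Group G] (f : FreeGroup (Fin 2) →* G)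
    (hf : Function.Injective f) : ¬ IsAmenable G := by
  classical
  rintro ⟨m, hadd, hsmul, hpos, hone, hinv⟩
  obtain ⟨h, hh⟩ := exists_equivariant f hf
  have hmono : ∀ f₁ f₂ : G → ℝ, (∃ C, ∀ x, |f₁ x| ≤ C) → (∃ C, ∀ x, |f₂ x| ≤ C) →
      (∀ x, f₁ x ≤ f₂ x) → m f₁ ≤ m f₂ := by
    rintro f₁ f₂ ⟨C₁, h₁⟩ ⟨C₂, h₂⟩ hle
    have hb : ∃ C, ∀ x, |(f₂ - f₁) x| ≤ C :=
      ⟨C₂ + C₁, fun x => (abs_sub _ _).trans (add_le_add (h₂ x) (h₁ x))⟩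
    have e := hadd f₁ (f₂ - f₁) ⟨C₁, h₁⟩ hb
    rw [add_sub_cancel] at e
    have := hpos (f₂ - f₁) hb fun x => sub_nonneg.2 (hle x)
    linarith
  let ind : Fin 2 × Bool → G → ℝ := fun w g => if h g ∈ FreeGroup.startsWith w then 1 else 0
  have ind_bd : ∀ w, ∃ C, ∀ x, |ind w x| ≤ C := fun w =>
    ⟨1, fun x => by simp only [ind]; split_ifs <;> simp⟩
  have bd_add : ∀ f₁ f₂ : G → ℝ, (∃ C, ∀ x, |f₁ x| ≤ C) → (∃ C, ∀ x, |f₂ x| ≤ C) →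
      ∃ C, ∀ x, |(f₁ + f₂) x| ≤ C := by
    rintro f₁ f₂ ⟨C₁, h₁⟩ ⟨C₂, h₂⟩
    exact ⟨C₁ + C₂, fun x => (abs_add_le _ _).trans (add_le_add (h₁ x) (h₂ x))⟩
  have one_bd : ∃ C, ∀ _ : G, |(1 : ℝ)| ≤ C := ⟨1, fun _ => by simp⟩
  have hgen : ∀ i : Fin 2, 1 ≤ m (ind (i, true)) + m (ind (i, false)) := by
    intro i
    let w : FreeGroup (Fin 2) := FreeGroup.mk [(i, true)]
    have htr_bd : ∃ C, ∀ x, |ind (i, true) (f w * x)| ≤ C := by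
      obtain ⟨C, hC⟩ := ind_bd (i, true)
      exact ⟨C, fun x => hC _⟩
    rw [← hinv (f w) (ind (i, true)) (ind_bd _), ← hadd _ _ htr_bd (ind_bd _), ← hone]
    refine hmono _ _ one_bd (bd_add _ _ htr_bd (ind_bd _)) fun x => ?_
    simp only [Pi.add_apply, ind, hh]
    by_cases hx : h x ∈ FreeGroup.startsWith (i, false)
    · rw [if_pos hx]
      split_ifs <;> norm_num
    · rw [if_neg hx, if_pos (FreeGroup.startsWith_mk_mul (w := (i, true)) (h x) hx)]
      norm_num
  have htot : m (ind (0, true)) + m (ind (0, false)) + (m (ind (1, true)) + m (ind (1, false)))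
      ≤ 1 := by
    rw [← hadd _ _ (ind_bd _) (ind_bd _), ← hadd _ _ (ind_bd _) (ind_bd _),
      ← hadd _ _ (bd_add _ _ (ind_bd _) (ind_bd _)) (bd_add _ _ (ind_bd _) (ind_bd _)), ← hone]
    refine hmono _ _ (bd_add _ _ (bd_add _ _ (ind_bd _) (ind_bd _))
      (bd_add _ _ (ind_bd _) (ind_bd _))) one_bd fun x => ?_
    simp only [Pi.add_apply, ind, FreeGroup.startsWith, Set.mem_ofPred_eq]
    obtain ⟨o, ho⟩ : ∃ o, (h x).toWord[0]? = o := ⟨_, rfl⟩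
    simp only [ho]
    rcases o with _ | ⟨i, b⟩
    · simp
    · fin_cases i <;> cases b <;> simp
  have h0 := hgen 0
  have h1 := hgen 1
  linarith

/-! ### Rewriting marked blocks -/

section Blocks

variable {A : Type*} (ι : Bool → A)

/-- The binary word of length eight carrying the two data bits `d`: with `e₀ = 0000`, `e₁ = 0100`
and complements `f₀ = 1111`, `f₁ = 1011`, it is the concatenation of `e` indexed by `d.1` and `f`
indexed by `d.2`. Only the values at `0 ≤ r < 8` matter. -/
def blockWord (d : Bool × Bool) (r : ℤ) : Bool :=
  xor (decide (4 ≤ r)) ((d.1 && decide (r = 1)) || (d.2 && decide (r = 5)))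

/-- The block with data `d`, written in the letters `ι false`, `ι true`, occurs in `x` at
position `j`. -/
def IsBlock (x : ℤ → A) (j : ℤ) (d : Bool × Bool) : Prop :=
  ∀ r, 0 ≤ r → r < 8 → x (j + r) = ι (blockWord d r)

variable {ι}

/-- No proper suffix of one of the four block words is a prefix of another. -/
lemma blockWord_no_overlap : ∀ (d d' : Bool × Bool) (k : Fin 8), k ≠ 0 →
    ∃ r : Fin 8, (r : ℕ) + k < 8 ∧
      blockWord d (((r : ℕ) : ℤ) + ((k : ℕ) : ℤ)) ≠ blockWord d' ((r : ℕ) : ℤ) := by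
  decide

lemma blockWord_inj : ∀ d d' : Bool × Bool,
    blockWord d 1 = blockWord d' 1 → blockWord d 5 = blockWord d' 5 → d = d' := by
  decide

lemma IsBlock.unique_of_le (hι : Function.Injective ι) {x : ℤ → A} {i j : ℤ} {d d' : Bool × Bool}
    (h : IsBlock ι x i d) (h' : IsBlock ι x j d') (hij : i ≤ j) (hji : j < i + 8) :
    i = j ∧ d = d' := by
  obtain ⟨k, hk⟩ : ∃ k : Fin 8, j = i + ((k : ℕ) : ℤ) :=
    ⟨⟨(j - i).toNat, by omega⟩, by simp only; omega⟩
  by_cases hk0 : k = 0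
  · subst hk0
    obtain rfl : j = i := by simpa using hk
    refine ⟨rfl, blockWord_inj d d' (hι ?_) (hι ?_)⟩
    · rw [← h 1 (by norm_num) (by norm_num), ← h' 1 (by norm_num) (by norm_num)]
    · rw [← h 5 (by norm_num) (by norm_num), ← h' 5 (by norm_num) (by norm_num)]
  · obtain ⟨r, hr, hne⟩ := blockWord_no_overlap d d' k hk0
    refine absurd (hι ?_) hne
    rw [← h _ (by omega) (by omega), ← h' _ (by omega) (by omega), hk]
    congr 1
    ring

/-- Occurrences of blocks in a configuration never overlap. -/
lemma IsBlock.unique (hι : Function.Injective ι) {x : ℤ → A} {i j : ℤ} {d d' : Bool × Bool}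
    (h : IsBlock ι x i d) (h' : IsBlock ι x j d') (hij : i < j + 8) (hji : j < i + 8) :
    i = j ∧ d = d' := by
  rcases le_total i j with hle | hle
  · exact h.unique_of_le hι h' hle hji
  · obtain ⟨h1, h2⟩ := h'.unique_of_le hι h hle hij
    exact ⟨h1.symm, h2.symm⟩

variable (ι)

open Classical in
/-- Apply the permutation `π` to the data of every block occurring in `x`, leaving all other
letters unchanged. -/
noncomputable def rewrite (π : Equiv.Perm (Bool × Bool)) (x : ℤ → A) (m : ℤ) : A :=
  if h : ∃ jd : ℤ × (Bool × Bool), IsBlock ι x jd.1 jd.2 ∧ jd.1 ≤ m ∧ m < jd.1 + 8 then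
    ι (blockWord (π h.choose.2) (m - h.choose.1))
  else x m

variable {ι}

lemma rewrite_of_block (hι : Function.Injective ι) (π : Equiv.Perm (Bool × Bool)) {x : ℤ → A}
    {j m : ℤ} {d : Bool × Bool} (h : IsBlock ι x j d) (h1 : j ≤ m) (h2 : m < j + 8) :
    rewrite ι π x m = ι (blockWord (π d) (m - j)) := by
  have hex : ∃ jd : ℤ × (Bool × Bool), IsBlock ι x jd.1 jd.2 ∧ jd.1 ≤ m ∧ m < jd.1 + 8 :=
    ⟨(j, d), h, h1, h2⟩
  rw [rewrite, dif_pos hex]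
  obtain ⟨hb, hb1, hb2⟩ := hex.choose_spec
  obtain ⟨e1, e2⟩ := hb.unique hι h (by omega) (by omega)
  rw [e1, e2]

lemma rewrite_of_not (π : Equiv.Perm (Bool × Bool)) {x : ℤ → A} {m : ℤ}
    (h : ∀ j d, IsBlock ι x j d → j ≤ m → ¬ m < j + 8) : rewrite ι π x m = x m := by
  rw [rewrite, dif_neg]
  rintro ⟨⟨j, d⟩, hb, h1, h2⟩
  exact h j d hb h1 h2

lemma IsBlock.rewrite (hι : Function.Injective ι) (π : Equiv.Perm (Bool × Bool)) {x : ℤ → A}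
    {j : ℤ} {d : Bool × Bool} (h : IsBlock ι x j d) : IsBlock ι (rewrite ι π x) j (π d) := by
  intro r h1 h2
  rw [rewrite_of_block hι π h (by omega) (by omega), add_sub_cancel_left]

/-- Rewriting creates no new block positions: a block of the new configuration meets some block of
the old one (it would itself be old otherwise), and blocks cannot overlap properly. -/
lemma exists_isBlock_of_rewrite (hι : Function.Injective ι) (π : Equiv.Perm (Bool × Bool))
    {x : ℤ → A} {j : ℤ} {d : Bool × Bool} (h : IsBlock ι (rewrite ι π x) j d) :
    ∃ d', IsBlock ι x j d' := by
  by_cases hex : ∃ i d', IsBlock ι x i d' ∧ i < j + 8 ∧ j < i + 8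
  · obtain ⟨i, d', hb, h1, h2⟩ := hex
    obtain ⟨rfl, -⟩ := (hb.rewrite hι π).unique hι h h1 h2
    exact ⟨d', hb⟩
  · refine ⟨d, fun r h1 h2 => ?_⟩
    rw [← h r h1 h2, rewrite_of_not]
    intro i d' hb h3 h4
    exact hex ⟨i, d', hb, by omega, by omega⟩

lemma rewrite_one (hι : Function.Injective ι) (x : ℤ → A) : rewrite ι 1 x = x := by
  funext m
  by_cases hex : ∃ j d, IsBlock ι x j d ∧ j ≤ m ∧ m < j + 8
  · obtain ⟨j, d, hb, h1, h2⟩ := hex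
    rw [rewrite_of_block hι 1 hb h1 h2, Equiv.Perm.one_apply, ← hb _ (by omega) (by omega)]
    congr 1
    ring
  · exact rewrite_of_not 1 fun j d hb h1 h2 => hex ⟨j, d, hb, h1, h2⟩

lemma rewrite_mul (hι : Function.Injective ι) (π ρ : Equiv.Perm (Bool × Bool)) (x : ℤ → A) :
    rewrite ι (π * ρ) x = rewrite ι π (rewrite ι ρ x) := by
  funext m
  by_cases hex : ∃ j d, IsBlock ι x j d ∧ j ≤ m ∧ m < j + 8
  · obtain ⟨j, d, hb, h1, h2⟩ := hex
    rw [rewrite_of_block hι _ hb h1 h2, rewrite_of_block hι _ (hb.rewrite hι ρ) h1 h2,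
      Equiv.Perm.mul_apply]
  · have hn : ∀ j d, IsBlock ι x j d → j ≤ m → ¬ m < j + 8 :=
      fun j d hb h1 h2 => hex ⟨j, d, hb, h1, h2⟩
    rw [rewrite_of_not _ hn, rewrite_of_not _ _, rewrite_of_not _ hn]
    intro j d hb h1 h2
    obtain ⟨d', hb'⟩ := exists_isBlock_of_rewrite hι ρ hb
    exact hn j d' hb' h1 h2

lemma rewrite_shift (hι : Function.Injective ι) (π : Equiv.Perm (Bool × Bool)) (x : ℤ → A)
    (m : ℤ) : rewrite ι π (fun n => x (n + 1)) m = rewrite ι π x (m + 1) := by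
  have hsh : ∀ j d, IsBlock ι (fun n => x (n + 1)) j d ↔ IsBlock ι x (j + 1) d := by
    intro j d
    simp only [IsBlock, add_right_comm]
  by_cases hex : ∃ j d, IsBlock ι (fun n => x (n + 1)) j d ∧ j ≤ m ∧ m < j + 8
  · obtain ⟨j, d, hb, h1, h2⟩ := hex
    rw [rewrite_of_block hι _ hb h1 h2,
      rewrite_of_block hι _ ((hsh j d).1 hb) (by omega) (by omega)]
    congr 2
    ring
  · rw [rewrite_of_not _ fun j d hb h1 h2 => hex ⟨j, d, hb, h1, h2⟩, rewrite_of_not]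
    intro j d hb h1 h2
    refine hex ⟨j - 1, d, (hsh _ _).2 ?_, by omega, by omega⟩
    rwa [sub_add_cancel]

/-- The letter at `m` after rewriting depends only on the letters at distance less than eight. -/
lemma rewrite_local (hι : Function.Injective ι) (π : Equiv.Perm (Bool × Bool)) {x y : ℤ → A}
    {m : ℤ} (h : ∀ i ∈ Set.Ioo (m - 8) (m + 8), y i = x i) : rewrite ι π y m = rewrite ι π x m := by
  have hb : ∀ j d, j ≤ m → m < j + 8 → (IsBlock ι y j d ↔ IsBlock ι x j d) := by
    intro j d h1 h2
    refine forall_congr' fun r => forall_congr' fun h3 => forall_congr' fun h4 => ?_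
    rw [h (j + r) ⟨by omega, by omega⟩]
  by_cases hex : ∃ j d, IsBlock ι x j d ∧ j ≤ m ∧ m < j + 8
  · obtain ⟨j, d, hbx, h1, h2⟩ := hex
    rw [rewrite_of_block hι _ hbx h1 h2,
      rewrite_of_block hι _ ((hb j d h1 h2).2 hbx) h1 h2]
  · rw [rewrite_of_not _ fun j d hbx h1 h2 => hex ⟨j, d, hbx, h1, h2⟩,
      rewrite_of_not _ fun j d hby h1 h2 => hex ⟨j, d, (hb j d h1 h2).1 hby, h1, h2⟩]
    exact h m ⟨by omega, by omega⟩

lemma continuous_rewrite [TopologicalSpace A] [DiscreteTopology A]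
    (hι : Function.Injective ι) (π : Equiv.Perm (Bool × Bool)) :
    Continuous (rewrite ι π) := by
  refine continuous_pi fun m => IsLocallyConstant.continuous ?_
  rw [IsLocallyConstant.iff_eventually_eq]
  intro x
  have hev : ∀ᶠ y in nhds x, ∀ i ∈ Set.Ioo (m - 8) (m + 8), y i = x i := by
    rw [Filter.eventually_all_finite (Set.finite_Ioo _ _)]
    intro i _
    exact (continuous_apply i).continuousAt.preimage_mem_nhds
      ((isOpen_discrete {x i}).mem_nhds rfl)
  exact hev.mono fun y hy => rewrite_local hι π hy

/-- Rewriting blocks by `π`, as an automorphism of the full shift. -/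
noncomputable def rewriteAut [TopologicalSpace A] [DiscreteTopology A]
    (hι : Function.Injective ι) (π : Equiv.Perm (Bool × Bool)) : ShiftAut A :=
  ⟨{ toFun := rewrite ι π
     invFun := rewrite ι π⁻¹
     left_inv := fun x => by rw [← rewrite_mul hι, inv_mul_cancel, rewrite_one hι]
     right_inv := fun x => by rw [← rewrite_mul hι, mul_inv_cancel, rewrite_one hι]
     continuous_toFun := continuous_rewrite hι π
     continuous_invFun := continuous_rewrite hι π⁻¹ }, by
    refine Subgroup.mem_centralizer_singleton_iff.2 (Homeomorph.ext fun x => funext fun m => ?_)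
    exact rewrite_shift hι π x m⟩

/-- Translate by four places and exchange the letters `ι false` and `ι true`. -/
def flipHomeo (A : Type*) [TopologicalSpace A] [DiscreteTopology A] [DecidableEq A]
    (ι : Bool → A) : (ℤ → A) ≃ₜ (ℤ → A) where
  toFun x m := Equiv.swap (ι false) (ι true) (x (m - 4))
  invFun x m := Equiv.swap (ι false) (ι true) (x (m + 4))
  left_inv x := by simp
  right_inv x := by simp
  continuous_toFun :=
    continuous_pi fun m => continuous_of_discreteTopology.comp (continuous_apply (m - 4))
  continuous_invFun :=
    continuous_pi fun m => continuous_of_discreteTopology.comp (continuous_apply (m + 4))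

/-- `flipHomeo` as an automorphism of the full shift. -/
def flipAut (A : Type*) [TopologicalSpace A] [DiscreteTopology A] [DecidableEq A]
    (ι : Bool → A) : ShiftAut A :=
  ⟨flipHomeo A ι, by
    refine Subgroup.mem_centralizer_singleton_iff.2 (Homeomorph.ext fun x => funext fun m => ?_)
    change Equiv.swap (ι false) (ι true) (x (m - 4 + 1)) =
      Equiv.swap (ι false) (ι true) (x (m + 1 - 4))
    rw [show m - 4 + 1 = m + 1 - 4 by ring]⟩

/-! ### Coded bit sequences -/

variable (ι)

/-- The configuration coding the bit sequence `s`: cell `n` occupies the places `4n, …, 4n + 3`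
and holds `e` indexed by `s n` for even `n`, `f` indexed by `s n` for odd `n`. -/
def encode (s : ℤ → Bool) (m : ℤ) : A :=
  ι (xor (decide (m / 4 % 2 = 1)) (s (m / 4) && decide (m % 4 = 1)))

/-- Apply `π` to the pairs of bits at `(2k, 2k + 1)`. -/
def pairMap (π : Equiv.Perm (Bool × Bool)) (s : ℤ → Bool) (n : ℤ) : Bool :=
  if n % 2 = 0 then (π (s n, s (n + 1))).1 else (π (s (n - 1), s n)).2

/-- The configurations coding a sequence whose last `1` sits at a place congruent to `ε`
modulo two. -/
def lastOne (ε : ℤ) : Set (ℤ → A) :=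
  {x | ∃ (s : ℤ → Bool) (n : ℤ), x = encode ι s ∧ n % 2 = ε ∧ s n = true ∧
    ∀ m, n < m → s m = false}

variable {ι}

lemma isBlock_encode (s : ℤ → Bool) (k : ℤ) :
    IsBlock ι (encode ι s) (8 * k) (s (2 * k), s (2 * k + 1)) := by
  intro r h1 h2
  rw [encode, blockWord]
  congr 1
  rcases lt_or_ge r 4 with h | h
  · rw [show (8 * k + r) / 4 = 2 * k by omega, show (8 * k + r) % 4 = r by omega,
      show 2 * k % 2 = 0 by omega]
    simp [show ¬ 4 ≤ r by omega, show r ≠ 5 by omega]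
  · rw [show (8 * k + r) / 4 = 2 * k + 1 by omega, show (8 * k + r) % 4 = r - 4 by omega,
      show (2 * k + 1) % 2 = 1 by omega]
    simp [h, show r ≠ 1 by omega, show r - 4 = 1 ↔ r = 5 by omega]

lemma rewrite_encode (hι : Function.Injective ι) (π : Equiv.Perm (Bool × Bool)) (s : ℤ → Bool) :
    rewrite ι π (encode ι s) = encode ι (pairMap π s) := by
  funext m
  have hm : m = 8 * (m / 8) + m % 8 := by omega
  have hpair : (pairMap π s (2 * (m / 8)), pairMap π s (2 * (m / 8) + 1)) =
      π (s (2 * (m / 8)), s (2 * (m / 8) + 1)) := by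
    simp [pairMap, show (2 * (m / 8) + 1) % 2 = 1 by omega]
  have h1 := (isBlock_encode (ι := ι) s (m / 8)).rewrite hι π (m % 8) (by omega) (by omega)
  have h2 := isBlock_encode (ι := ι) (pairMap π s) (m / 8) (m % 8) (by omega) (by omega)
  rw [← hm] at h1 h2
  rw [h1, h2, hpair]

lemma flip_encode [TopologicalSpace A] [DiscreteTopology A] [DecidableEq A] (s : ℤ → Bool) :
    flipHomeo A ι (encode ι s) = encode ι fun n => s (n - 1) := by
  funext m
  have hswap : ∀ b, Equiv.swap (ι false) (ι true) (ι b) = ι (!b) := by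
    intro b
    cases b <;> simp
  change Equiv.swap (ι false) (ι true) (encode ι s (m - 4)) = _
  rw [encode, hswap, encode, show (m - 4) / 4 = m / 4 - 1 by omega,
    show (m - 4) % 4 = m % 4 by omega]
  congr 1
  rcases Int.emod_two_eq_zero_or_one (m / 4) with h | h
  · simp [h, show (m / 4 - 1) % 2 = 1 by omega]
  · simp [h, show (m / 4 - 1) % 2 = 0 by omega]

lemma encode_injective (hι : Function.Injective ι) : Function.Injective (encode ι) := by
  intro s t h
  funext n
  have h1 := hι (congrFun h (4 * n + 1))
  rw [show (4 * n + 1) / 4 = n by omega, show (4 * n + 1) % 4 = 1 by omega] at h1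
  simpa using h1

lemma lastOne_nonempty (ε : ℤ) (hε : ε % 2 = ε) : (lastOne ι ε).Nonempty :=
  ⟨_, fun n => decide (n = ε), ε, rfl, hε, by simp, fun m hm => by simp [hm.ne']⟩

lemma lastOne_disjoint (hι : Function.Injective ι) : Disjoint (lastOne ι 0) (lastOne ι 1) := by
  rw [Set.disjoint_left]
  rintro x ⟨s, n, rfl, hn, h1, h2⟩ ⟨t, k, hst, hk, h3, h4⟩
  obtain rfl := encode_injective hι hst
  rcases lt_trichotomy n k with h | h | h
  · simp [h2 k h] at h3
  · omega
  · simp [h4 n h] at h1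

/-- If `π` fixes `00` and sends `10` to a pair ending in `1`, it moves a last `1` at an even place
one step to the right. -/
lemma rewrite_lastOne (hι : Function.Injective ι) (π : Equiv.Perm (Bool × Bool))
    (h00 : π (false, false) = (false, false)) (h10 : (π (true, false)).2 = true)
    (x : ℤ → A) (hx : x ∈ lastOne ι 0) : rewrite ι π x ∈ lastOne ι 1 := by
  obtain ⟨s, n, rfl, hn, h1, h2⟩ := hx
  refine ⟨pairMap π s, n + 1, rewrite_encode hι π s, by omega, ?_, fun m hm => ?_⟩
  · rw [pairMap, if_neg (by omega), add_sub_cancel_right, h1, h2 _ (by omega), h10]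
  · rw [pairMap]
    split_ifs with h
    · rw [h2 m (by omega), h2 (m + 1) (by omega), h00]
    · rw [h2 m (by omega), h2 (m - 1) (by omega), h00]

lemma flip_lastOne [TopologicalSpace A] [DiscreteTopology A] [DecidableEq A] {ε δ : ℤ}
    (h : ∀ n : ℤ, n % 2 = ε → (n + 1) % 2 = δ)
    (x : ℤ → A) (hx : x ∈ lastOne ι ε) : flipHomeo A ι x ∈ lastOne ι δ := by
  obtain ⟨s, n, rfl, hn, h1, h2⟩ := hx
  exact ⟨_, n + 1, flip_encode s, h n hn, by simpa using h1, fun m hm => h2 _ (by omega)⟩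

lemma flip_symm_lastOne [TopologicalSpace A] [DiscreteTopology A] [DecidableEq A] {ε δ : ℤ}
    (h : ∀ n : ℤ, n % 2 = ε → (n - 1) % 2 = δ)
    (x : ℤ → A) (hx : x ∈ lastOne ι ε) : (flipHomeo A ι).symm x ∈ lastOne ι δ := by
  obtain ⟨s, n, rfl, hn, h1, h2⟩ := hx
  refine ⟨fun k => s (k + 1), n - 1, ?_, h n hn, by simpa using h1, fun m hm => h2 _ (by omega)⟩
  rw [Homeomorph.symm_apply_eq, flip_encode]
  simp

end Blocks

/-- The three-cycle `10 ↦ 01 ↦ 11 ↦ 10` of pairs of bits. -/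
def threeCycle : Equiv.Perm (Bool × Bool) where
  toFun d := (d.2, xor d.1 d.2)
  invFun d := (xor d.1 d.2, d.1)
  left_inv := by decide
  right_inv := by decide

/-- The evaluation action of `Aut(A^ℤ)` on configurations. -/
abbrev shiftAutAction (A : Type*) [TopologicalSpace A] : MulAction (ShiftAut A) (ℤ → A) where
  smul g x := g.1 x
  one_smul _ := rfl
  mul_smul _ _ _ := rfl

lemma exists_free_subgroup (A : Type*) [TopologicalSpace A] [DiscreteTopology A] (ι : Bool → A)
    (hι : Function.Injective ι) :
    ∃ f : FreeGroup (Fin 2) →* ShiftAut A, Function.Injective f := by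
  classical
  let _ := shiftAutAction A
  let p : ShiftAut A := rewriteAut hι threeCycle
  let t : ShiftAut A := flipAut A ι
  have hp3 : p * p = p⁻¹ := by
    refine Subtype.ext (Homeomorph.ext fun x => ?_)
    change rewrite ι threeCycle (rewrite ι threeCycle x) = rewrite ι threeCycle⁻¹ x
    rw [← rewrite_mul hι, show threeCycle * threeCycle = threeCycle⁻¹ by decide]
  have hp : ∀ x ∈ lastOne ι 0, p • x ∈ lastOne ι 1 :=
    rewrite_lastOne hι threeCycle (by decide) (by decide)
  have hp' : ∀ x ∈ lastOne ι 0, p⁻¹ • x ∈ lastOne ι 1 :=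
    rewrite_lastOne hι threeCycle⁻¹ (by decide) (by decide)
  have ht : ∀ x ∈ lastOne ι 1, t • x ∈ lastOne ι 0 := flip_lastOne (by omega)
  have ht' : ∀ x ∈ lastOne ι 1, t⁻¹ • x ∈ lastOne ι 0 := flip_symm_lastOne (by omega)
  refine exists_free_of_order_three p (t * p * t⁻¹) (lastOne ι 0) (lastOne ι 1)
    (lastOne_nonempty 0 rfl) (lastOne_nonempty 1 rfl) (lastOne_disjoint hι) hp3 ?_ hp hp' ?_ ?_
  · rw [conj_inv, ← hp3]
    group
  · intro x hx
    rw [mul_smul, mul_smul]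
    exact ht _ (hp _ (ht' x hx))
  · intro x hx
    rw [conj_inv, mul_smul, mul_smul]
    exact ht _ (hp' _ (ht' x hx))

/-- `Aut(A^ℤ)` contains a free subgroup on two generators; in particular it is
not amenable. -/
theorem shiftAut_free_subgroup_not_amenable
    (A : Type*) [Fintype A] [TopologicalSpace A] [DiscreteTopology A]
    (hA : 2 ≤ Fintype.card A) :
    (∃ f : FreeGroup (Fin 2) →* ShiftAut A, Function.Injective f) ∧
      ¬ IsAmenable (ShiftAut A) := by
  obtain ⟨a, b, hab⟩ := Fintype.one_lt_card_iff.1 hA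
  obtain ⟨f, hf⟩ := exists_free_subgroup A (fun c : Bool => if c then a else b) (by
    intro c d h
    cases c <;> cases d <;> simp_all [eq_comm])
  exact ⟨⟨f, hf⟩, not_isAmenable_of_free f hf⟩
end
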